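/- Let n ≥ 2 and let φ : ⟨DS_n⟩ → ⟨DS_n⟩ be an ℝ-linear map. Then φ(A) and A have the same characteristic polynomial for every A ∈ ⟨DS_n⟩ if and only if: when n = 2, φ(A) = P A P⁻¹ for all A ∈ ⟨DS_2⟩ for some P ∈ {I₂, diag(1, −1)}; and when n ≥ 3, there exists an invertible matrix P ∈ ⟨DS_n⟩ such that either φ(A) = P A P⁻¹ for all A ∈ ⟨DS_n⟩, or φ(A) = P Aᵀ P⁻¹ for all A ∈ ⟨DS_n⟩. -/

import Mathlib

/-!
Equality of characteristic polynomials gives `tr φ(A)^k = tr A^k` for all `k`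
(`trace_pow_eq_of_charpoly_eq`). The case `k = 2`, polarized, says that `φ` is an isometry of the
trace form, which is nondegenerate on `⟨DS_n⟩`, so `φ` is bijective there; the case `k = 3` then gives
`φ(A²) = φ(A)²`, so `φ` is a Jordan automorphism of `⟨DS_n⟩` (`jordan_of_charpoly`).

Let `J = e eᵀ / n`. As an algebra, `⟨DS_n⟩` is the product of `ℝ J` and the matrices with zero row and
column sums, a copy of `M_{n-1}(ℝ)`. The image `φ(J)` is a central idempotent of trace one, hence `J`,
or possibly `1 - J` when `n = 2` (`image_avgMat`). For `n = 2` the matrices `1` and `J` span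
`⟨DS_2⟩`, so this determines `φ`. For `n ≥ 3`, `φ` restricts to a Jordan automorphism of the second
factor, which is a homomorphism or an antihomomorphism by Herstein's argument (`hom_or_antihom`).
A homomorphism is a conjugation (`exists_conj`, by an explicit intertwiner); an antihomomorphism
becomes a homomorphism after composing with the transpose.
-/

open Matrix

/-- Membership in `⟨DS_n⟩`: `∃ c, A e = c e ∧ Aᵀ e = c e`, where `e` is the all-ones vector. -/
def InSpanDS {n : ℕ} (A : Matrix (Fin n) (Fin n) ℝ) : Prop :=
  ∃ c : ℝ, A *ᵥ (fun _ => (1:ℝ)) = c • (fun _ => (1:ℝ)) ∧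
    Aᵀ *ᵥ (fun _ => (1:ℝ)) = c • (fun _ => (1:ℝ))

/-- Membership in `⟨RS_n⟩`: `∃ c, A e = c e`. -/
def InSpanRS {n : ℕ} (A : Matrix (Fin n) (Fin n) ℝ) : Prop :=
  ∃ c : ℝ, A *ᵥ (fun _ => (1:ℝ)) = c • (fun _ => (1:ℝ))

/-- Membership in `R_n = {e vᵀ : vᵀ e = 0}`. -/
def InRn {n : ℕ} (A : Matrix (Fin n) (Fin n) ℝ) : Prop :=
  ∃ v : Fin n → ℝ, (∑ i, v i) = 0 ∧ A = vecMulVec (fun _ => (1:ℝ)) v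

/-- Membership in `C_n = {v eᵀ : vᵀ e = 0}`. -/
def InCn {n : ℕ} (A : Matrix (Fin n) (Fin n) ℝ) : Prop :=
  ∃ v : Fin n → ℝ, (∑ i, v i) = 0 ∧ A = vecMulVec v (fun _ => (1:ℝ))

/-- `A` is doubly stochastic. -/
def IsDS {n : ℕ} (A : Matrix (Fin n) (Fin n) ℝ) : Prop :=
  (∀ i j, 0 ≤ A i j) ∧ (∀ i, ∑ j, A i j = 1) ∧ (∀ j, ∑ i, A i j = 1)

/-- `A` is row stochastic. -/
def IsRS {n : ℕ} (A : Matrix (Fin n) (Fin n) ℝ) : Prop :=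
  (∀ i j, 0 ≤ A i j) ∧ (∀ i, ∑ j, A i j = 1)

/-- `A` is column stochastic. -/
def IsCS {n : ℕ} (A : Matrix (Fin n) (Fin n) ℝ) : Prop :=
  (∀ i j, 0 ≤ A i j) ∧ (∀ j, ∑ i, A i j = 1)

/-- `A` is a permutation matrix. -/
def IsPerm {n : ℕ} (A : Matrix (Fin n) (Fin n) ℝ) : Prop :=
  ∃ σ : Equiv.Perm (Fin n), A = σ.permMatrix ℝ

/-- `s_A = (Σ_{i,j} a_{ij})/n²`. -/
noncomputable def sAvg {n : ℕ} (A : Matrix (Fin n) (Fin n) ℝ) : ℝ :=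
  (∑ i, ∑ j, A i j) / (n ^ 2 : ℝ)

/-- `r(A)` with `i`-th entry `(Σ_k a_{ki})/n − s_A`. -/
noncomputable def rVec {n : ℕ} (A : Matrix (Fin n) (Fin n) ℝ) : Fin n → ℝ :=
  fun i => (∑ k, A k i) / (n : ℝ) - sAvg A

/-- `c(A)` with `i`-th entry `(Σ_k a_{ik})/n − s_A`. -/
noncomputable def cVec {n : ℕ} (A : Matrix (Fin n) (Fin n) ℝ) : Fin n → ℝ :=
  fun i => (∑ k, A i k) / (n : ℝ) - sAvg A

/-- `A_R = e · r(A)ᵀ`. -/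
noncomputable def partR {n : ℕ} (A : Matrix (Fin n) (Fin n) ℝ) : Matrix (Fin n) (Fin n) ℝ :=
  vecMulVec (fun _ => (1:ℝ)) (rVec A)

/-- `A_C = c(A) · eᵀ`. -/
noncomputable def partC {n : ℕ} (A : Matrix (Fin n) (Fin n) ℝ) : Matrix (Fin n) (Fin n) ℝ :=
  vecMulVec (cVec A) (fun _ => (1:ℝ))

/-- `A_DS = A − A_R − A_C`. -/
noncomputable def partDS {n : ℕ} (A : Matrix (Fin n) (Fin n) ℝ) : Matrix (Fin n) (Fin n) ℝ :=
  A - partR A - partC A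

/-! ### Traces of powers are determined by the characteristic polynomial -/

/-- Over `ℂ`, `det q(A)` depends only on the characteristic polynomial of `A`, since `q` splits into
linear factors. Taking `q = t - X ^ k` shows that the characteristic polynomial of `A ^ k`, hence
its trace, is determined by that of `A`. -/
theorem trace_pow_eq_of_charpoly_eq {n : ℕ} {A B : Matrix (Fin n) (Fin n) ℝ}
    (h : A.charpoly = B.charpoly) (k : ℕ) : (A ^ k).trace = (B ^ k).trace := by
  have hC : ∀ A : Matrix (Fin n) (Fin n) ℝ, ((A.map (algebraMap ℝ ℂ)) ^ k).trace
      = algebraMap ℝ ℂ (A ^ k).trace := by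
    intro A
    rw [← Matrix.map_pow, AddMonoidHom.map_trace (algebraMap ℝ ℂ)]
  apply (algebraMap ℝ ℂ).injective
  rw [← hC, ← hC]
  set A' := A.map (algebraMap ℝ ℂ) with hA'
  set B' := B.map (algebraMap ℝ ℂ) with hB'
  have h' : A'.charpoly = B'.charpoly := by
    rw [hA', hB', Matrix.charpoly_map, Matrix.charpoly_map, h]
  have hdet : ∀ q : Polynomial ℂ, (Polynomial.aeval A' q).det = (Polynomial.aeval B' q).det := by
    intro q
    -- `q ↦ det q(M)` is a monoid homomorphism, so it is determined on split polynomials by its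
    -- values on constants and on the factors `X - a`.
    let F : Matrix (Fin n) (Fin n) ℂ → (Polynomial ℂ →* ℂ) := fun M =>
      Matrix.detMonoidHom.comp ((Polynomial.aeval M : Polynomial ℂ →ₐ[ℂ] _) :
        Polynomial ℂ →* Matrix (Fin n) (Fin n) ℂ)
    have hF : ∀ M q, F M q = (Polynomial.aeval M q).det := fun _ _ => rfl
    have hX : ∀ M a, F M (Polynomial.X - Polynomial.C a) = (-1) ^ n * M.charpoly.eval a := by
      intro M a
      rw [hF, Matrix.eval_charpoly]
      simp only [map_sub, Polynomial.aeval_X, Polynomial.aeval_C]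
      rw [← neg_sub, Matrix.det_neg, Fintype.card_fin]
      rfl
    rw [← hF, ← hF, (IsAlgClosed.splits q).eq_prod_roots, map_mul, map_mul,
      map_multiset_prod, map_multiset_prod, Multiset.map_map, Multiset.map_map]
    congr 1
    · simp [hF]
    · congr 1
      refine Multiset.map_congr rfl fun a _ => ?_
      simp only [Function.comp, hX, h']
  have hpow : (A' ^ k).charpoly = (B' ^ k).charpoly := by
    refine Polynomial.funext fun t => ?_
    have := hdet (Polynomial.C t - Polynomial.X ^ k)
    simp only [map_sub, map_pow, Polynomial.aeval_X, Polynomial.aeval_C] at this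
    rw [Matrix.eval_charpoly, Matrix.eval_charpoly]
    exact this
  rcases Nat.eq_zero_or_pos n with rfl | hn
  · simp [Matrix.trace]
  · have : Nonempty (Fin n) := ⟨⟨0, hn⟩⟩
    rw [Matrix.trace_eq_neg_charpoly_coeff, Matrix.trace_eq_neg_charpoly_coeff, hpow]

/-! ### Jordan homomorphisms -/

section Jordan
variable {R : Type*} [Ring R] [Algebra ℝ R] {S : Submodule ℝ R} {φ : R →ₗ[ℝ] R}

theorem jordan_add (hJ : ∀ a ∈ S, φ (a * a) = φ a * φ a)
    {a b : R} (ha : a ∈ S) (hb : b ∈ S) :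
    φ (a * b) + φ (b * a) = φ a * φ b + φ b * φ a := by
  have h := hJ (a + b) (S.add_mem ha hb)
  simp only [add_mul, mul_add, map_add, hJ a ha, hJ b hb] at h
  rw [← sub_eq_zero] at h ⊢
  rw [← h]
  abel

/-- A Jordan homomorphism respects `a b a`: with `a ∘ b = ab + ba`, one has
`2 aba = a ∘ (a ∘ b) - a² ∘ b`. -/
theorem jordan_triple (hS : ∀ a ∈ S, ∀ b ∈ S, a * b ∈ S)
    (hJ : ∀ a ∈ S, φ (a * a) = φ a * φ a)
    {a b : R} (ha : a ∈ S) (hb : b ∈ S) : φ (a * b * a) = φ a * φ b * φ a := by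
  have h1 := jordan_add hJ ha (S.add_mem (hS a ha b hb) (hS b hb a ha))
  have h2 := jordan_add hJ (hS a ha a ha) hb
  have h3 := jordan_add hJ ha hb
  rw [map_add, h3] at h1
  rw [hJ a ha] at h2
  have h4 : (2 : ℝ) • φ (a * b * a) = (2 : ℝ) • (φ a * φ b * φ a) := by
    simp only [mul_add, add_mul, map_add, ← mul_assoc] at h1 h2 ⊢
    simp only [two_smul]
    rw [← sub_eq_zero] at h1 h2 ⊢
    refine Eq.trans ?_ ((congrArg₂ (· - ·) h1 h2).trans (sub_zero 0))
    abel
  exact smul_right_injective R (two_ne_zero) h4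

theorem jordan_triple_add (hS : ∀ a ∈ S, ∀ b ∈ S, a * b ∈ S)
    (hJ : ∀ a ∈ S, φ (a * a) = φ a * φ a) {a b c : R} (ha : a ∈ S) (hb : b ∈ S) (hc : c ∈ S) :
    φ (a * b * c) + φ (c * b * a) = φ a * φ b * φ c + φ c * φ b * φ a := by
  have h := jordan_triple hS hJ (S.add_mem ha hc) hb
  simp only [add_mul, mul_add, map_add, jordan_triple hS hJ ha hb, jordan_triple hS hJ hc hb] at h
  rw [← sub_eq_zero] at h ⊢
  rw [← h]
  abel

/-- The identity behind Herstein's theorem. It comes from evaluating `φ` on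
`(ab) x (ba) + (ba) x (ab) = a (b x b) a + b (a x a) b` in two ways. -/
theorem jordan_smiley (hS : ∀ a ∈ S, ∀ b ∈ S, a * b ∈ S)
    (hJ : ∀ a ∈ S, φ (a * a) = φ a * φ a) {a b x : R} (ha : a ∈ S) (hb : b ∈ S) (hx : x ∈ S) :
    (φ (a * b) - φ a * φ b) * φ x * (φ (a * b) - φ b * φ a) +
      (φ (a * b) - φ b * φ a) * φ x * (φ (a * b) - φ a * φ b) = 0 := by
  have h1 := jordan_triple_add hS hJ (hS a ha b hb) hx (hS b hb a ha)
  have h2 := jordan_triple hS hJ ha (hS _ (hS b hb x hx) b hb)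
  have h3 := jordan_triple hS hJ hb (hS _ (hS a ha x hx) a ha)
  rw [jordan_triple hS hJ hb hx] at h2
  rw [jordan_triple hS hJ ha hx] at h3
  have h4 : φ (b * a) = φ a * φ b + φ b * φ a - φ (a * b) :=
    eq_sub_of_add_eq' (jordan_add hJ ha hb)
  have e1 : a * b * x * (b * a) = a * (b * x * b) * a := by simp only [mul_assoc]
  have e2 : b * a * x * (a * b) = b * (a * x * a) * b := by simp only [mul_assoc]
  rw [e1, e2, h2, h3, h4] at h1
  generalize φ (a * b) = u at *
  generalize φ a = p at *
  generalize φ b = q at *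
  generalize φ x = y at *
  have h5 := sub_eq_zero.2 h1
  rw [← h5]
  noncomm_ring
end Jordan

/-- A strong form of primeness of the full matrix ring, in characteristic different from two. -/
theorem matrix_prime {n : ℕ} {s t : Matrix (Fin n) (Fin n) ℝ}
    (h : ∀ X, s * X * t + t * X * s = 0) : s = 0 ∨ t = 0 := by
  have key : ∀ i j k l, s i j * t k l + t i j * s k l = 0 := by
    intro i j k l
    have := congrFun (congrFun (h (Matrix.single j k 1)) i) l
    simpa [Matrix.mul_assoc, Matrix.mul_apply, Matrix.single_apply, ite_and,
      Finset.sum_ite_eq] using this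
  by_contra! hc
  obtain ⟨hs, ht⟩ := hc
  obtain ⟨i, j, hij⟩ : ∃ i j, s i j ≠ 0 := by
    by_contra! hz; exact hs (Matrix.ext hz)
  have h0 : t i j = 0 := by
    have h1 := key i j i j
    have : s i j * t i j = 0 := by linarith
    exact (mul_eq_zero.1 this).resolve_left hij
  refine ht (Matrix.ext fun k l => ?_)
  have h1 := key i j k l
  rw [h0, zero_mul, add_zero] at h1
  exact (mul_eq_zero.1 h1).resolve_left hij

/-- A subspace covered by two subspaces lies in one of them. -/
theorem le_or_le_of_forall_mem {M : Type*} [AddCommGroup M] [Module ℝ M] {S p q : Submodule ℝ M}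
    (h : ∀ a ∈ S, a ∈ p ∨ a ∈ q) : S ≤ p ∨ S ≤ q := by
  by_contra! hc
  obtain ⟨⟨a, ha, hap⟩, ⟨b, hb, hbq⟩⟩ :=
    And.imp SetLike.not_le_iff_exists.1 SetLike.not_le_iff_exists.1 hc
  have haq := (h a ha).resolve_left hap
  have hbp := (h b hb).resolve_right hbq
  rcases h _ (S.add_mem ha hb) with h1 | h1
  · exact hap ((p.add_mem_iff_left hbp).1 h1)
  · exact hbq ((q.add_mem_iff_right haq).1 h1)

/-! ### The algebra `⟨DS_n⟩` and its ideal of matrices with zero row and column sums -/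

/-- The matrix `J = e eᵀ / n`, the orthogonal projection onto `ℝ e`. -/
noncomputable def avgMat (n : ℕ) : Matrix (Fin n) (Fin n) ℝ := Matrix.of fun _ _ => (n : ℝ)⁻¹

/-- The subspace `⟨DS_n⟩`, described as the commutant of `J`; see `inSpanDS_iff` for the agreement
with `InSpanDS`. -/
noncomputable def spanDS (n : ℕ) : Submodule ℝ (Matrix (Fin n) (Fin n) ℝ) where
  carrier := {A | A * avgMat n = avgMat n * A}
  zero_mem' := by simp
  add_mem' := by
    intro a b ha hb
    simp only [Set.mem_ofPred_eq] at *
    rw [add_mul, mul_add, ha, hb]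
  smul_mem' := by
    intro c a ha
    simp only [Set.mem_ofPred_eq] at *
    rw [smul_mul_assoc, mul_smul_comm, ha]

/-- The matrices with zero row and column sums, that is, those annihilated by `J` on both sides.
They form a copy of `End (e^⊥)` with unit `1 - J`, and `⟨DS_n⟩ = ℝ J ⊕ zeroSumMat n`. -/
noncomputable def zeroSumMat (n : ℕ) : Submodule ℝ (Matrix (Fin n) (Fin n) ℝ) where
  carrier := {A | A * avgMat n = 0 ∧ avgMat n * A = 0}
  zero_mem' := by simp
  add_mem' := by
    rintro a b ⟨ha, ha'⟩ ⟨hb, hb'⟩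
    exact ⟨by rw [add_mul, ha, hb, add_zero], by rw [mul_add, ha', hb', add_zero]⟩
  smul_mem' := by
    rintro c a ⟨ha, ha'⟩
    exact ⟨by rw [smul_mul_assoc, ha, smul_zero], by rw [mul_smul_comm, ha', smul_zero]⟩

section avg
variable {n : ℕ}

theorem mem_spanDS {A : Matrix (Fin n) (Fin n) ℝ} :
    A ∈ spanDS n ↔ A * avgMat n = avgMat n * A := Iff.rfl

theorem mem_zeroSumMat {A : Matrix (Fin n) (Fin n) ℝ} :
    A ∈ zeroSumMat n ↔ A * avgMat n = 0 ∧ avgMat n * A = 0 := Iff.rfl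

theorem avgMat_transpose : (avgMat n)ᵀ = avgMat n := rfl

theorem avgMat_mul_self (hn : n ≠ 0) : avgMat n * avgMat n = avgMat n := by
  have : (n : ℝ) ≠ 0 := by exact_mod_cast hn
  ext i j
  simp [avgMat, Matrix.mul_apply, this]

theorem trace_avgMat (hn : n ≠ 0) : (avgMat n).trace = 1 := by
  have : (n : ℝ) ≠ 0 := by exact_mod_cast hn
  simp [avgMat, Matrix.trace, this]

theorem mul_mem_spanDS (A : Matrix (Fin n) (Fin n) ℝ) (hA : A ∈ spanDS n)
    (B : Matrix (Fin n) (Fin n) ℝ) (hB : B ∈ spanDS n) : A * B ∈ spanDS n := by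
  rw [mem_spanDS] at *
  rw [mul_assoc, hB, ← mul_assoc, hA, mul_assoc]

theorem mul_mem_zeroSumMat (A : Matrix (Fin n) (Fin n) ℝ) (hA : A ∈ zeroSumMat n)
    (B : Matrix (Fin n) (Fin n) ℝ) (hB : B ∈ zeroSumMat n) : A * B ∈ zeroSumMat n := by
  rw [mem_zeroSumMat] at *
  exact ⟨by rw [mul_assoc, hB.1, mul_zero], by rw [← mul_assoc, hA.2, zero_mul]⟩

theorem transpose_mem_spanDS {A : Matrix (Fin n) (Fin n) ℝ} (hA : A ∈ spanDS n) :
    Aᵀ ∈ spanDS n := by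
  rw [mem_spanDS] at *
  have := congrArg transpose hA
  rw [transpose_mul, transpose_mul, avgMat_transpose] at this
  exact this.symm

theorem transpose_mem_zeroSumMat {A : Matrix (Fin n) (Fin n) ℝ} (hA : A ∈ zeroSumMat n) :
    Aᵀ ∈ zeroSumMat n := by
  rw [mem_zeroSumMat] at *
  have h1 := congrArg transpose hA.1
  have h2 := congrArg transpose hA.2
  rw [transpose_mul, avgMat_transpose, transpose_zero] at h1 h2
  exact ⟨h2, h1⟩

theorem zeroSumMat_le : zeroSumMat n ≤ spanDS n := fun _ hA => hA.1.trans hA.2.symm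

theorem one_mem_spanDS : (1 : Matrix (Fin n) (Fin n) ℝ) ∈ spanDS n := by simp [mem_spanDS]

theorem avgMat_mem_spanDS : avgMat n ∈ spanDS n := rfl

theorem compl_mem_zeroSumMat (hn : n ≠ 0) : 1 - avgMat n ∈ zeroSumMat n := by
  rw [mem_zeroSumMat, sub_mul, mul_sub, avgMat_mul_self hn]
  simp

theorem sandwich_mem (hn : n ≠ 0) (X : Matrix (Fin n) (Fin n) ℝ) :
    (1 - avgMat n) * X * (1 - avgMat n) ∈ zeroSumMat n := by
  have h := compl_mem_zeroSumMat hn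
  rw [mem_zeroSumMat] at *
  exact ⟨by rw [mul_assoc, h.1, mul_zero], by rw [← mul_assoc, ← mul_assoc, h.2, zero_mul, zero_mul]⟩

theorem mul_compl {A : Matrix (Fin n) (Fin n) ℝ} (hA : A ∈ zeroSumMat n) :
    A * (1 - avgMat n) = A := by rw [mul_sub, hA.1, mul_one, sub_zero]

theorem compl_mul {A : Matrix (Fin n) (Fin n) ℝ} (hA : A ∈ zeroSumMat n) :
    (1 - avgMat n) * A = A := by rw [sub_mul, hA.2, one_mul, sub_zero]

theorem inSpanDS_iff (hn : n ≠ 0) {A : Matrix (Fin n) (Fin n) ℝ} : InSpanDS A ↔ A ∈ spanDS n := by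
  have h0 : (n : ℝ) ≠ 0 := by exact_mod_cast hn
  have h0' := inv_ne_zero h0
  rw [mem_spanDS, ← Matrix.ext_iff]
  have e : ∀ i j, (A * avgMat n) i j = (avgMat n * A) i j ↔ ∑ k, A i k = ∑ k, A k j := by
    intro i j
    simp only [avgMat, Matrix.mul_apply, Matrix.of_apply, ← Finset.sum_mul, ← Finset.mul_sum]
    rw [mul_comm]
    exact mul_right_inj' h0'
  simp only [e]
  constructor
  · rintro ⟨c, h1, h2⟩ i j
    have h1 := congrFun h1 i
    have h2 := congrFun h2 j
    simp only [mulVec, dotProduct, transpose_apply, mul_one, Pi.smul_apply, smul_eq_mul] at h1 h2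
    rw [h1, h2]
  · intro h
    let i0 : Fin n := ⟨0, Nat.pos_of_ne_zero hn⟩
    refine ⟨∑ k, A i0 k, ?_, ?_⟩ <;> ext i <;>
      simp only [mulVec, dotProduct, transpose_apply, mul_one, Pi.smul_apply, smul_eq_mul]
    · rw [h i i, ← h i0 i]
    · rw [← h i0 i]

theorem exists_mul_avgMat (hn : n ≠ 0) {A : Matrix (Fin n) (Fin n) ℝ} (hA : A ∈ spanDS n) :
    ∃ c : ℝ, A * avgMat n = c • avgMat n := by
  obtain ⟨c, h, -⟩ := (inSpanDS_iff hn).2 hA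
  refine ⟨c, ?_⟩
  ext i j
  have h1 := congrFun h i
  simp only [mulVec, dotProduct, mul_one, Pi.smul_apply, smul_eq_mul] at h1
  simp [avgMat, Matrix.mul_apply, ← Finset.sum_mul, h1]

/-- The decomposition `⟨DS_n⟩ = ℝ J + zeroSumMat n`. -/
theorem exists_eq_add (hn : n ≠ 0) {A : Matrix (Fin n) (Fin n) ℝ} (hA : A ∈ spanDS n) :
    ∃ c : ℝ, ∃ B ∈ zeroSumMat n, A = c • avgMat n + B := by
  obtain ⟨c, hc⟩ := exists_mul_avgMat hn hA
  refine ⟨c, A - A * avgMat n, ?_, by rw [hc]; abel⟩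
  have hJ := avgMat_mul_self hn
  rw [mem_spanDS] at hA
  constructor
  · rw [sub_mul, mul_assoc, hJ, sub_self]
  · rw [mul_sub, hA, ← mul_assoc, hJ, sub_self]

theorem compl_ne_zero (hn : 2 ≤ n) : 1 - avgMat n ≠ 0 := by
  intro h
  have h2 := congrArg trace h
  rw [trace_sub, trace_avgMat (by omega), trace_one, Fintype.card_fin, trace_zero] at h2
  have : (2 : ℝ) ≤ n := by exact_mod_cast hn
  linarith

/-- The trace form is nondegenerate on every transpose-closed subspace, because
`tr (A Aᵀ) = 0` forces `A = 0`. -/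
theorem eq_zero_of_trace_mul {S : Submodule ℝ (Matrix (Fin n) (Fin n) ℝ)}
    (hS : ∀ A ∈ S, Aᵀ ∈ S) {A : Matrix (Fin n) (Fin n) ℝ} (hA : A ∈ S)
    (h : ∀ B ∈ S, (A * B).trace = 0) : A = 0 := by
  have := h _ (hS A hA)
  rw [← conjTranspose_eq_transpose_of_trivial, trace_mul_conjTranspose_self_eq_zero_iff] at this
  exact this

end avg

/-! ### Spectrum preservers of `⟨DS_n⟩` are Jordan automorphisms -/

theorem surj_of_inj {n : ℕ} {S : Submodule ℝ (Matrix (Fin n) (Fin n) ℝ)}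
    {φ : Matrix (Fin n) (Fin n) ℝ →ₗ[ℝ] Matrix (Fin n) (Fin n) ℝ} (hφ : ∀ A ∈ S, φ A ∈ S)
    (hinj : ∀ A ∈ S, φ A = 0 → A = 0) : ∀ B ∈ S, ∃ A ∈ S, φ A = B := by
  intro B hB
  have h1 : Function.Injective (φ.restrict hφ) := by
    rw [injective_iff_map_eq_zero]
    rintro ⟨A, hA⟩ h
    exact Subtype.ext (hinj A hA (congrArg Subtype.val h))
  obtain ⟨⟨A, hA⟩, h⟩ := LinearMap.injective_iff_surjective.1 h1 ⟨B, hB⟩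
  exact ⟨A, hA, congrArg Subtype.val h⟩

section preserver
variable {n : ℕ} {φ : Matrix (Fin n) (Fin n) ℝ →ₗ[ℝ] Matrix (Fin n) (Fin n) ℝ}

theorem trace_mul_preserved (hch : ∀ A ∈ spanDS n, (φ A).charpoly = A.charpoly)
    {A B : Matrix (Fin n) (Fin n) ℝ} (hA : A ∈ spanDS n) (hB : B ∈ spanDS n) :
    (φ A * φ B).trace = (A * B).trace := by
  have h1 := trace_pow_eq_of_charpoly_eq (hch _ (add_mem hA hB)) 2
  have h2 := trace_pow_eq_of_charpoly_eq (hch _ hA) 2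
  have h3 := trace_pow_eq_of_charpoly_eq (hch _ hB) 2
  simp only [pow_two, map_add, add_mul, mul_add, trace_add] at h1 h2 h3
  rw [trace_mul_comm (φ B), trace_mul_comm B] at h1
  linarith

/-- Preservation of `tr (A ^ 3)`, polarized. -/
theorem trace_sq_mul_preserved (hch : ∀ A ∈ spanDS n, (φ A).charpoly = A.charpoly)
    {A B : Matrix (Fin n) (Fin n) ℝ} (hA : A ∈ spanDS n) (hB : B ∈ spanDS n) :
    (φ A * φ A * φ B).trace = (A * A * B).trace := by
  have key : ∀ X Y : Matrix (Fin n) (Fin n) ℝ, 6 * (X * X * Y).trace =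
      ((X + Y) ^ 3).trace - ((X - Y) ^ 3).trace - 2 * (Y ^ 3).trace := by
    intro X Y
    simp only [pow_succ, pow_zero, one_mul, add_mul, mul_add, sub_mul, mul_sub, trace_add,
      trace_sub]
    rw [trace_mul_cycle X Y X, trace_mul_cycle Y X X, trace_mul_cycle X Y X]
    ring
  have h1 := key A B
  have h2 := key (φ A) (φ B)
  rw [← map_add, ← map_sub, trace_pow_eq_of_charpoly_eq (hch _ (add_mem hA hB)),
    trace_pow_eq_of_charpoly_eq (hch _ (sub_mem hA hB)),
    trace_pow_eq_of_charpoly_eq (hch _ hB)] at h2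
  linarith

theorem inj_of_charpoly (hch : ∀ A ∈ spanDS n, (φ A).charpoly = A.charpoly) :
    ∀ A ∈ spanDS n, φ A = 0 → A = 0 := by
  intro A hA h
  refine eq_zero_of_trace_mul (fun _ => transpose_mem_spanDS) hA fun B hB => ?_
  rw [← trace_mul_preserved hch hA hB, h, zero_mul, trace_zero]

/-- `φ(A²) - φ(A)²` is orthogonal to the range of `φ` for the trace form, and that range is all of
`⟨DS_n⟩`. -/
theorem jordan_of_charpoly (hφ : ∀ A ∈ spanDS n, φ A ∈ spanDS n)
    (hch : ∀ A ∈ spanDS n, (φ A).charpoly = A.charpoly) :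
    ∀ A ∈ spanDS n, φ (A * A) = φ A * φ A := by
  intro A hA
  have hAA := mul_mem_spanDS A hA A hA
  rw [← sub_eq_zero]
  refine eq_zero_of_trace_mul (fun _ => transpose_mem_spanDS)
    (sub_mem (hφ _ hAA) (mul_mem_spanDS _ (hφ A hA) _ (hφ A hA))) fun B hB => ?_
  obtain ⟨Y, hY, rfl⟩ := surj_of_inj hφ (inj_of_charpoly hch) B hB
  rw [sub_mul, trace_sub, trace_mul_preserved hch hAA hY, trace_sq_mul_preserved hch hA hY,
    sub_self]

/-! ### The image of `J` -/

theorem map_one_of_jordan (hJ : ∀ A ∈ spanDS n, φ (A * A) = φ A * φ A)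
    (hsurj : ∀ B ∈ spanDS n, ∃ A ∈ spanDS n, φ A = B) : φ 1 = 1 := by
  obtain ⟨Y, hY, h⟩ := hsurj 1 one_mem_spanDS
  have h1 := jordan_add hJ (one_mem_spanDS (n := n)) hY
  simp only [mul_one, one_mul, h, ← two_smul ℝ] at h1
  exact (smul_right_injective _ two_ne_zero h1).symm

/-- `φ J` is central in `⟨DS_n⟩`. For `X ∈ zeroSumMat n` the Jordan identity gives
`φ J φ X + φ X φ J = 0`, and an idempotent anticommuting with `φ X` commutes with it. -/
theorem image_avgMat_comm (hn : n ≠ 0) (hJ : ∀ A ∈ spanDS n, φ (A * A) = φ A * φ A)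
    (hsurj : ∀ B ∈ spanDS n, ∃ A ∈ spanDS n, φ A = B) :
    ∀ B ∈ spanDS n, φ (avgMat n) * B = B * φ (avgMat n) := by
  intro B hB
  obtain ⟨Y, hY, rfl⟩ := hsurj B hB
  obtain ⟨c, X, hX, rfl⟩ := exists_eq_add hn hY
  have hf : φ (avgMat n) * φ (avgMat n) = φ (avgMat n) := by
    rw [← hJ _ avgMat_mem_spanDS, avgMat_mul_self hn]
  have h1 := jordan_add hJ (avgMat_mem_spanDS (n := n)) (zeroSumMat_le hX)
  rw [hX.1, hX.2, map_zero, add_zero] at h1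
  rw [map_add, map_smul]
  generalize φ (avgMat n) = f at *
  have h2 : f * φ X = φ X * f := by
    have h3 := congrArg (f * ·) h1
    have h4 := congrArg (· * f) h1
    simp only [mul_zero, zero_mul, mul_add, add_mul, ← mul_assoc, hf] at h3 h4
    rw [mul_assoc (φ X), hf] at h4
    exact add_right_cancel (b := f * φ X * f) (by rw [← h3, h4, add_comm])
  rw [mul_add, add_mul, mul_smul_comm, smul_mul_assoc, h2]

/-- The central idempotents of `⟨DS_n⟩` are `0`, `J`, `1 - J` and `1`, of traces `0`, `1`, `n - 1` and
`n`; the trace singles out `J`, unless `n = 2`, when `1 - J` also has trace one. -/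
theorem image_avgMat (hn : 2 ≤ n) {f : Matrix (Fin n) (Fin n) ℝ} (hf : f ∈ spanDS n)
    (hff : f * f = f) (htr : f.trace = 1) (hc : ∀ B ∈ spanDS n, f * B = B * f) :
    f = avgMat n ∨ (n = 2 ∧ f = 1 - avgMat n) := by
  have hn0 : n ≠ 0 := by omega
  have hnR : (2 : ℝ) ≤ n := by exact_mod_cast hn
  obtain ⟨c, g, hg, rfl⟩ := exists_eq_add hn0 hf
  have hJJ := avgMat_mul_self hn0
  obtain ⟨b, rfl⟩ : ∃ b : ℝ, g = b • (1 - avgMat n) := by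
    -- `key` below says `g X Q = Q X g` for every `X`, where `Q = 1 - J`; matrix units then show
    -- that `g` is proportional to `Q`.
    let i0 : Fin n := ⟨0, by omega⟩
    refine ⟨g i0 i0 / (1 - avgMat n) i0 i0, ?_⟩
    have hQ : (1 - avgMat n) i0 i0 ≠ 0 := by
      simp only [avgMat, Matrix.sub_apply, one_apply_eq, of_apply]
      have : (n : ℝ)⁻¹ ≤ 2⁻¹ := inv_anti₀ (by norm_num) hnR
      intro h
      norm_num at this
      linarith
    have key : ∀ X, g * X * (1 - avgMat n) = (1 - avgMat n) * X * g := by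
      intro X
      have hX := sandwich_mem hn0 X
      have h := hc _ (zeroSumMat_le hX)
      rw [add_mul, mul_add, smul_mul_assoc, mul_smul_comm, hX.1, hX.2, smul_zero, zero_add,
        zero_add, mul_assoc (_ * X), compl_mul hg, ← mul_assoc, ← mul_assoc, mul_compl hg] at h
      exact h
    ext i j
    have h := congrFun (congrFun (key (Matrix.single j i0 1)) i) i0
    generalize 1 - avgMat n = Q at h hQ ⊢
    simp [Matrix.mul_apply, Matrix.single_apply, ite_and] at h
    rw [Matrix.smul_apply, smul_eq_mul, div_mul_eq_mul_div, eq_div_iff hQ]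
    linarith
  have hQJ : (1 - avgMat n) * avgMat n = 0 := by rw [sub_mul, hJJ, one_mul, sub_self]
  have hJQ : avgMat n * (1 - avgMat n) = 0 := by rw [mul_sub, hJJ, mul_one, sub_self]
  have hQQ : (1 - avgMat n) * (1 - avgMat n) = 1 - avgMat n := by
    rw [mul_sub, hQJ, mul_one, sub_zero]
  have hJ0 : avgMat n ≠ 0 := by
    intro h
    have := trace_avgMat hn0
    rw [h, trace_zero] at this
    exact zero_ne_one this
  have hcc : c * c = c := by
    have := congrArg (· * avgMat n) hff
    simp only [add_mul, mul_add, smul_mul_assoc, mul_smul_comm, hQJ, hJQ, hQQ, hJJ, smul_zero,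
      add_zero, zero_add, smul_smul] at this
    exact smul_left_injective ℝ hJ0 this
  have hbb : b * b = b := by
    have := congrArg (· * (1 - avgMat n)) hff
    simp only [add_mul, mul_add, smul_mul_assoc, mul_smul_comm, hQJ, hJQ, hQQ, hJJ, smul_zero,
      add_zero, zero_add, smul_smul] at this
    exact smul_left_injective ℝ (compl_ne_zero hn) this
  rw [trace_add, trace_smul, trace_smul, trace_sub, trace_avgMat hn0, trace_one,
    Fintype.card_fin, smul_eq_mul, smul_eq_mul] at htr
  have hb : b = 0 ∨ b = 1 := by
    rcases eq_or_ne b 0 with h | h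
    · exact Or.inl h
    · exact Or.inr (mul_left_cancel₀ h (hbb.trans (mul_one b).symm))
  have hc' : c = 0 ∨ c = 1 := by
    rcases eq_or_ne c 0 with h | h
    · exact Or.inl h
    · exact Or.inr (mul_left_cancel₀ h (hcc.trans (mul_one c).symm))
  rcases hb with rfl | rfl
  · left
    have : c = 1 := by linarith
    simp [this]
  · rcases hc' with rfl | rfl
    · right
      have : (n : ℝ) = 2 := by linarith
      exact ⟨by exact_mod_cast this, by simp⟩
    · exfalso; linarith

/-! ### The restriction to matrices with zero row and column sums -/

theorem map_zeroSumMat (hφ : ∀ A ∈ spanDS n, φ A ∈ spanDS n)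
    (hJ : ∀ A ∈ spanDS n, φ (A * A) = φ A * φ A) (hf : φ (avgMat n) = avgMat n) :
    ∀ A ∈ zeroSumMat n, φ A ∈ zeroSumMat n := by
  intro X hX
  have h1 := jordan_add hJ (avgMat_mem_spanDS (n := n)) (zeroSumMat_le hX)
  have h2 := hφ X (zeroSumMat_le hX)
  rw [mem_spanDS] at h2
  rw [hX.1, hX.2, map_zero, add_zero, hf, h2, ← two_smul ℝ] at h1
  have h3 := (smul_eq_zero.1 h1.symm).resolve_left two_ne_zero
  exact ⟨h2.trans h3, h3⟩

/-- Herstein's theorem for `zeroSumMat n`: a surjective Jordan endomorphism is a homomorphism or an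
antihomomorphism. The dichotomy holds for each pair `(A, B)` by `jordan_smiley` and `matrix_prime`;
covering by two subspaces, used for `B` and then for `A`, makes it uniform. -/
theorem hom_or_antihom (hn : n ≠ 0) (hφ : ∀ A ∈ zeroSumMat n, φ A ∈ zeroSumMat n)
    (hJ : ∀ A ∈ zeroSumMat n, φ (A * A) = φ A * φ A)
    (hsurj : ∀ B ∈ zeroSumMat n, ∃ A ∈ zeroSumMat n, φ A = B) :
    (∀ A ∈ zeroSumMat n, ∀ B ∈ zeroSumMat n, φ (A * B) = φ A * φ B) ∨
    (∀ A ∈ zeroSumMat n, ∀ B ∈ zeroSumMat n, φ (A * B) = φ B * φ A) := by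
  have hmul := mul_mem_zeroSumMat (n := n)
  have h1 : ∀ A ∈ zeroSumMat n, ∀ B ∈ zeroSumMat n,
      φ (A * B) = φ A * φ B ∨ φ (A * B) = φ B * φ A := by
    intro A hA B hB
    rw [← sub_eq_zero, ← sub_eq_zero (b := φ B * φ A)]
    have hs : φ (A * B) - φ A * φ B ∈ zeroSumMat n :=
      sub_mem (hφ _ (hmul A hA B hB)) (hmul _ (hφ A hA) _ (hφ B hB))
    have ht : φ (A * B) - φ B * φ A ∈ zeroSumMat n :=
      sub_mem (hφ _ (hmul A hA B hB)) (hmul _ (hφ B hB) _ (hφ A hA))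
    refine matrix_prime fun X => ?_
    -- `s` and `t` absorb `1 - J`, so only the compression of `X` to `zeroSumMat n` matters.
    obtain ⟨x, hx, hxX⟩ := hsurj _ (sandwich_mem hn X)
    have h := jordan_smiley hmul hJ hA hB hx
    rw [hxX] at h
    generalize φ (A * B) - φ A * φ B = s at *
    generalize φ (A * B) - φ B * φ A = t at *
    rw [← mul_assoc, ← mul_assoc, mul_compl hs, mul_assoc (s * X), compl_mul ht,
      ← mul_assoc, ← mul_assoc, mul_compl ht, mul_assoc (t * X), compl_mul hs] at h
    exact h
  let L : Matrix (Fin n) (Fin n) ℝ →ₗ[ℝ] Matrix (Fin n) (Fin n) ℝ →ₗ[ℝ] _ :=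
    LinearMap.mul ℝ (Matrix (Fin n) (Fin n) ℝ)
  have h2 : ∀ A ∈ zeroSumMat n, (∀ B ∈ zeroSumMat n, φ (A * B) = φ A * φ B) ∨
      (∀ B ∈ zeroSumMat n, φ (A * B) = φ B * φ A) := fun A hA =>
    le_or_le_of_forall_mem (p := LinearMap.eqLocus (φ ∘ₗ L A) (L (φ A) ∘ₗ φ))
      (q := LinearMap.eqLocus (φ ∘ₗ L A) (L.flip (φ A) ∘ₗ φ)) (h1 A hA)
  have h3 := le_or_le_of_forall_mem (S := zeroSumMat n)
    (p := ⨅ B ∈ zeroSumMat n, LinearMap.eqLocus (φ ∘ₗ L.flip B) (L.flip (φ B) ∘ₗ φ))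
    (q := ⨅ B ∈ zeroSumMat n, LinearMap.eqLocus (φ ∘ₗ L.flip B) (L (φ B) ∘ₗ φ))
    (fun A hA => by
      simp only [Submodule.mem_iInf]
      exact h2 A hA)
  simp only [SetLike.le_def, Submodule.mem_iInf] at h3
  exact h3

/-- A Skolem–Noether statement. With `Q = 1 - J` and fixed indices `i₀`, `k₀`, the matrix `N` whose
`j`-th column is the `k₀`-th column of `φ(Q E_{j i₀} Q)` satisfies `φ(A) N = N A` on
`zeroSumMat n`, and `P = J + N` intertwines on `⟨DS_n⟩`. -/
theorem exists_conj (hn : 2 ≤ n) (hφ : ∀ A ∈ zeroSumMat n, φ A ∈ zeroSumMat n)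
    (hmul : ∀ A ∈ zeroSumMat n, ∀ B ∈ zeroSumMat n, φ (A * B) = φ A * φ B)
    (hne : φ (1 - avgMat n) ≠ 0) (hf : φ (avgMat n) = avgMat n) :
    ∃ P ∈ spanDS n, IsUnit P ∧ ∀ A ∈ spanDS n, φ A = P * A * P⁻¹ := by
  have hn0 : n ≠ 0 := by omega
  set Q := 1 - avgMat n with hQdef
  have hQ := compl_mem_zeroSumMat hn0
  rw [← hQdef] at hQ
  have hQQ : Q * Q = Q := mul_compl hQ
  have hsand : ∀ X, Q * X * Q ∈ zeroSumMat n := sandwich_mem hn0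
  have hlin : ∀ (X : Matrix (Fin n) (Fin n) ℝ) (j i : Fin n), φ (Q * (X * Matrix.single j i 1) * Q)
      = ∑ l, X l j • φ (Q * Matrix.single l i 1 * Q) := by
    intro X j i
    have : X * Matrix.single j i 1 = ∑ l, X l j • Matrix.single l i (1 : ℝ) := by
      ext a b
      simp [Matrix.mul_apply, Matrix.single_apply, ite_and, Matrix.sum_apply]
    rw [this, Finset.mul_sum, Finset.sum_mul, map_sum]
    simp only [mul_smul_comm, smul_mul_assoc, map_smul]
  obtain ⟨i0, k0, hN0⟩ : ∃ i k, ∃ j l, φ (Q * Matrix.single j i 1 * Q) l k ≠ 0 := by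
    by_contra! hz
    apply hne
    have : Q = ∑ i, Q * Matrix.single i i 1 * Q := by
      rw [← Finset.sum_mul, ← Finset.mul_sum, Matrix.sum_single_one, mul_one, hQQ]
    rw [this, map_sum]
    refine Finset.sum_eq_zero fun i _ => ?_
    ext l k
    exact hz i k i l
  let N : Matrix (Fin n) (Fin n) ℝ := Matrix.of fun l j => φ (Q * Matrix.single j i0 1 * Q) l k0
  have hNapply : ∀ l j, N l j = φ (Q * Matrix.single j i0 1 * Q) l k0 := fun _ _ => rfl
  have hNX : ∀ X l j, (N * X) l j = φ (Q * (X * Matrix.single j i0 1) * Q) l k0 := by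
    intro X l j
    rw [hlin, Matrix.mul_apply, Matrix.sum_apply]
    refine Finset.sum_congr rfl fun m _ => ?_
    rw [Matrix.smul_apply, smul_eq_mul, hNapply, mul_comm]
  have hXN : ∀ (X : Matrix (Fin n) (Fin n) ℝ) (l j : Fin n), (X * N) l j = (X * φ (Q * Matrix.single j i0 1 * Q)) l k0 := by
    intro X l j
    rfl
  have hint : ∀ A ∈ zeroSumMat n, φ A * N = N * A := by
    intro A hA
    ext l j
    rw [hNX, hXN, ← hmul A hA _ (hsand _)]
    simp only [← mul_assoc]
    rw [mul_compl hA, compl_mul hA]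
  have hJN : avgMat n * N = 0 := by
    ext l j
    rw [hXN, (hφ _ (hsand _)).2]
    rfl
  have hNJ : N * avgMat n = 0 := by
    ext l j
    rw [hNX, ← mul_assoc, hQ.1, zero_mul, zero_mul, map_zero]
    rfl
  have hJJ := avgMat_mul_self hn0
  have hinj : Function.Injective (avgMat n + N).mulVec := by
    rw [← Matrix.coe_mulVecLin, injective_iff_map_eq_zero]
    intro x hx
    rw [Matrix.mulVecLin_apply] at hx
    have hJx : avgMat n *ᵥ x = 0 := by
      have := congrArg (avgMat n *ᵥ ·) hx
      simpa only [mulVec_mulVec, mul_add, hJJ, hJN, add_zero, mulVec_zero] using this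
    have hNx : N *ᵥ x = 0 := by rwa [add_mulVec, hJx, zero_add] at hx
    have hQx : Q *ᵥ x = x := by rw [hQdef, sub_mulVec, hJx, one_mulVec, sub_zero]
    -- A nonzero `x` in the kernel would make `N` vanish, since the orbit `{A x}` is all of `e^⊥`.
    by_contra hx0
    obtain ⟨l, hl⟩ := Function.ne_iff.1 hx0
    obtain ⟨j, k, hjk⟩ := hN0
    apply hjk
    -- With `A = Q E_{jl} Q`, `N A x = φ(A) N x = 0`, while `A x = x_l Q e_j`; hence `N e_j = 0`.
    have h1 : N *ᵥ ((Q * Matrix.single j l 1 * Q) *ᵥ x) = 0 := by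
      rw [mulVec_mulVec, ← hint _ (hsand _), ← mulVec_mulVec, hNx, mulVec_zero]
    rw [← mulVec_mulVec, hQx, mulVec_mulVec, ← mul_assoc, hQdef, mul_sub, hNJ, mul_one, sub_zero,
      ← mulVec_mulVec, Matrix.single_mulVec] at h1
    change N *ᵥ Pi.single j (1 * x l) = 0 at h1
    have h2 : N k j * x l = 0 := by simpa [mulVec_single] using congrFun h1 k
    exact (mul_eq_zero.1 h2).resolve_right hl
  have hunit : IsUnit (avgMat n + N) := Matrix.mulVec_injective_iff_isUnit.1 hinj
  refine ⟨avgMat n + N, ?_, hunit, ?_⟩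
  · rw [mem_spanDS, add_mul, mul_add, hJN, hNJ]
  · intro A hA
    obtain ⟨c, B, hB, rfl⟩ := exists_eq_add hn0 hA
    have hdet := (Matrix.isUnit_iff_isUnit_det _).1 hunit
    have h : φ (c • avgMat n + B) * (avgMat n + N) = (avgMat n + N) * (c • avgMat n + B) := by
      simp only [map_add, map_smul, hf, add_mul, mul_add, smul_mul_assoc, mul_smul_comm, hJN, hNJ,
        hint B hB, (hφ B hB).1, hB.2, smul_zero, add_zero, zero_add]
    rw [← h, Matrix.mul_nonsing_inv_cancel_right _ _ hdet]
end preserver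

/-! ### The characterization -/

theorem exists_of_mem_spanDS_two {A : Matrix (Fin 2) (Fin 2) ℝ} (hA : A ∈ spanDS 2) :
    ∃ a b : ℝ, A = a • (1 : Matrix (Fin 2) (Fin 2) ℝ) + b • avgMat 2 := by
  rw [mem_spanDS, ← Matrix.ext_iff] at hA
  have h00 := hA 0 0
  have h01 := hA 0 1
  simp only [avgMat, Matrix.mul_apply, of_apply, Fin.sum_univ_two] at h00 h01
  push_cast at h00 h01
  refine ⟨A 0 0 - A 0 1, 2 * A 0 1, ?_⟩
  ext i j
  fin_cases i <;> fin_cases j <;> simp [avgMat] <;> linarith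

theorem stmt14 (n : ℕ) (hn : 2 ≤ n)
    (φ : Matrix (Fin n) (Fin n) ℝ →ₗ[ℝ] Matrix (Fin n) (Fin n) ℝ)
    (hφ : ∀ A, InSpanDS A → InSpanDS (φ A)) :
    (∀ A, InSpanDS A → (φ A).charpoly = A.charpoly) ↔
    ((n = 2 ∧ ∃ P : Matrix (Fin n) (Fin n) ℝ,
        (P = 1 ∨ P = Matrix.diagonal (fun i => if i.val = 0 then (1:ℝ) else -1)) ∧
        ∀ A, InSpanDS A → φ A = P * A * P⁻¹) ∨
     (3 ≤ n ∧ ∃ P : Matrix (Fin n) (Fin n) ℝ, InSpanDS P ∧ IsUnit P ∧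
        ((∀ A, InSpanDS A → φ A = P * A * P⁻¹) ∨
         (∀ A, InSpanDS A → φ A = P * Aᵀ * P⁻¹)))) := by
  have hn0 : n ≠ 0 := by omega
  simp only [inSpanDS_iff hn0] at hφ ⊢
  constructor
  · intro hch
    have hJ := jordan_of_charpoly hφ hch
    have hinj := inj_of_charpoly hch
    have hsurj := surj_of_inj hφ hinj
    have hone := map_one_of_jordan hJ hsurj
    have hdich := image_avgMat hn (hφ _ avgMat_mem_spanDS)
      (by rw [← hJ _ avgMat_mem_spanDS, avgMat_mul_self hn0])
      (by
        have := trace_pow_eq_of_charpoly_eq (hch _ avgMat_mem_spanDS) 1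
        rwa [pow_one, pow_one, trace_avgMat hn0] at this)
      (image_avgMat_comm hn0 hJ hsurj)
    rcases hn.eq_or_lt with rfl | hn3
    · left
      refine ⟨rfl, ?_⟩
      rcases hdich with hf | ⟨-, hf⟩
      · refine ⟨1, Or.inl rfl, fun A hA => ?_⟩
        obtain ⟨a, b, rfl⟩ := exists_of_mem_spanDS_two hA
        simp [hf, hone]
      -- Here `φ` exchanges `J` and `1 - J`, which conjugation by `diag(1, -1)` also does.
      · refine ⟨_, Or.inr rfl, fun A hA => ?_⟩
        obtain ⟨a, b, rfl⟩ := exists_of_mem_spanDS_two hA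
        rw [map_add, map_smul, map_smul, hf, hone,
          Matrix.inv_eq_right_inv (B := Matrix.diagonal fun i => if i.val = 0 then (1 : ℝ) else -1)]
        · ext i j
          fin_cases i <;> fin_cases j <;> simp [avgMat, Matrix.diagonal_mul, Matrix.mul_diagonal] <;>
            (left; norm_num)
        · ext i j
          fin_cases i <;> fin_cases j <;> simp
    · right
      have hf : φ (avgMat n) = avgMat n := hdich.resolve_right (by omega)
      refine ⟨hn3, ?_⟩
      have hE := map_zeroSumMat hφ hJ hf
      have hEinj : ∀ A ∈ zeroSumMat n, φ A = 0 → A = 0 := fun A hA => hinj A (zeroSumMat_le hA)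
      have hQ : φ (1 - avgMat n) ≠ 0 := fun h =>
        compl_ne_zero hn (hEinj _ (compl_mem_zeroSumMat hn0) h)
      rcases hom_or_antihom hn0 hE (fun A hA => hJ A (zeroSumMat_le hA)) (surj_of_inj hE hEinj)
        with h | h
      · obtain ⟨P, hP, hPu, hc⟩ := exists_conj hn hE h hQ hf
        exact ⟨P, hP, hPu, Or.inl hc⟩
      -- In the antihomomorphism case, `A ↦ φ(Aᵀ)` is a homomorphism.
      · let T : Matrix (Fin n) (Fin n) ℝ →ₗ[ℝ] Matrix (Fin n) (Fin n) ℝ :=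
          (Matrix.transposeLinearEquiv (Fin n) (Fin n) ℝ ℝ).toLinearMap
        have hT : ∀ A, (φ ∘ₗ T) A = φ Aᵀ := fun _ => rfl
        obtain ⟨P, hP, hPu, hc⟩ := exists_conj (φ := φ ∘ₗ T) hn
          (fun A hA => hE _ (transpose_mem_zeroSumMat hA))
          (fun A hA B hB => by
            rw [hT, hT, hT, transpose_mul]
            exact h _ (transpose_mem_zeroSumMat hB) _ (transpose_mem_zeroSumMat hA))
          (by rwa [hT, transpose_sub, transpose_one, avgMat_transpose])
          (by rw [hT, avgMat_transpose, hf])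
        refine ⟨P, hP, hPu, Or.inr fun A hA => ?_⟩
        rw [← hc _ (transpose_mem_spanDS hA), hT, transpose_transpose]
  · have hconj : ∀ P A : Matrix (Fin n) (Fin n) ℝ, IsUnit P →
        (P * A * P⁻¹).charpoly = A.charpoly := by
      rintro _ A ⟨P, rfl⟩
      exact Matrix.charpoly_units_conj P A
    rintro (⟨-, P, hP, h⟩ | ⟨-, P, -, hP, h | h⟩) A hA
    · rw [h A hA, hconj]
      rcases hP with rfl | rfl
      · exact isUnit_one
      · rw [Matrix.isUnit_iff_isUnit_det, Matrix.det_diagonal, isUnit_iff_ne_zero,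
          Finset.prod_ne_zero_iff]
        intro i _
        split_ifs <;> norm_num
    · rw [h A hA, hconj _ _ hP]
    · rw [h A hA, hconj _ _ hP, Matrix.charpoly_transpose]
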